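/- The monoid Φ_3iet of 3iet preserving morphisms is not finitely generated: there is no finite set S ⊆ Φ_3iet such that every 3iet preserving morphism is a composition of finitely many elements of S. -/

import Mathlib

/-- The three-letter alphabet {A, B, C}. -/
inductive Letter : Type
  | A | B | C
  deriving DecidableEq

/-- Left-closed 3-interval exchange transformation with parameters (α, β, γ),
defined piecewise on the domain [0, α+β+γ) (and extended by the same formulas
elsewhere). -/
noncomputable def Tleft (α β γ : ℝ) (x : ℝ) : ℝ :=
  if x < α then x + β + γ else if x < α + β then x - α + γ else x - α - β

/-- The inverse of `Tleft` on its domain. -/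
noncomputable def TleftInv (α β γ : ℝ) (x : ℝ) : ℝ :=
  if x < γ then x + α + β else if x < β + γ then x + α - γ else x - β - γ

/-- Right-closed 3-interval exchange transformation with parameters (α, β, γ),
defined piecewise on the domain (0, α+β+γ]. -/
noncomputable def Tright (α β γ : ℝ) (x : ℝ) : ℝ :=
  if x ≤ α then x + β + γ else if x ≤ α + β then x - α + γ else x - α - β

/-- The inverse of `Tright` on its domain. -/
noncomputable def TrightInv (α β γ : ℝ) (x : ℝ) : ℝ :=
  if x ≤ γ then x + α + β else if x ≤ β + γ then x + α - γ else x - β - γ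

/-- ℤ-indexed iteration: nonnegative powers use `f`, negative powers use the
inverse map `g`. -/
noncomputable def zIter (f g : ℝ → ℝ) : ℤ → ℝ → ℝ
  | Int.ofNat n => f^[n]
  | Int.negSucc n => g^[n + 1]

/-- The letter coding of a point, left-closed convention:
A on [0,α), B on [α,α+β), C on [α+β,α+β+γ). -/
noncomputable def codeLeft (α β : ℝ) (x : ℝ) : Letter :=
  if x < α then Letter.A else if x < α + β then Letter.B else Letter.C

/-- The letter coding of a point, right-closed convention:
A on (0,α], B on (α,α+β], C on (α+β,α+β+γ]. -/
noncomputable def codeRight (α β : ℝ) (x : ℝ) : Letter :=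
  if x ≤ α then Letter.A else if x ≤ α + β then Letter.B else Letter.C

/-- The biinfinite word coding the orbit of x₀ under the left-closed
3-interval exchange transformation with parameters (α, β, γ). -/
noncomputable def uLeft (α β γ x₀ : ℝ) (n : ℤ) : Letter :=
  codeLeft α β (zIter (Tleft α β γ) (TleftInv α β γ) n x₀)

/-- The biinfinite word coding the orbit of x₀ under the right-closed
3-interval exchange transformation with parameters (α, β, γ). -/
noncomputable def uRight (α β γ x₀ : ℝ) (n : ℤ) : Letter :=
  codeRight α β (zIter (Tright α β γ) (TrightInv α β γ) n x₀)

/-- A biinfinite word over {A,B,C} is a 3iet word if it codes the orbit of a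
point under a 3-interval exchange transformation (in either convention) whose
parameters α, β, γ > 0 satisfy: α+β and β+γ are linearly independent over ℚ. -/
def Is3ietWord (u : ℤ → Letter) : Prop :=
  ∃ α β γ x₀ : ℝ, 0 < α ∧ 0 < β ∧ 0 < γ ∧
    LinearIndependent ℚ ![α + β, β + γ] ∧
    ((x₀ ∈ Set.Ico (0 : ℝ) (α + β + γ) ∧ u = uLeft α β γ x₀) ∨
     (x₀ ∈ Set.Ioc (0 : ℝ) (α + β + γ) ∧ u = uRight α β γ x₀))

/-- A morphism over the alphabet {A,B,C}, determined by the images of the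
three letters (as an endomorphism of the free monoid {A,B,C}*). -/
abbrev Morph := Letter → List Letter

/-- `IsImageWord φ u v` says that v is the biinfinite word
···φ(u₋₂)φ(u₋₁)φ(u₀)φ(u₁)···, in which the block φ(u₀) starts at position 0:
`c m` is the position at which the block φ(u_m) starts. -/
def IsImageWord (φ : Morph) (u v : ℤ → Letter) : Prop :=
  ∃ c : ℤ → ℤ, c 0 = 0 ∧ (∀ m : ℤ, c (m + 1) = c m + (φ (u m)).length) ∧
    ∀ (m : ℤ) (i : ℕ) (h : i < (φ (u m)).length),
      v (c m + (i : ℤ)) = (φ (u m)).get ⟨i, h⟩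

/-- A morphism is 3iet preserving if its letter images are nonempty (so that
it acts on biinfinite words) and it maps every 3iet word to a 3iet word. -/
def Preserves3iet (φ : Morph) : Prop :=
  (∀ a, φ a ≠ []) ∧
  ∀ u v : ℤ → Letter, Is3ietWord u → IsImageWord φ u v → Is3ietWord v

/-- Composition of morphisms: `compM φ ψ` is the morphism φ ∘ ψ,
sending a letter a to the image under φ of the word ψ(a). -/
def compM (φ ψ : Morph) : Morph := fun a => ((ψ a).map φ).flatten

/-- The identity morphism. -/
def idM : Morph := fun a => [a]

/-!
Send a word over `{A, B, C}` to the numbers of `0`s and `1`s in its image under `A ↦ 0`, `B ↦ 01`,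
`C ↦ 1`; this pair, its content, determines the translation that an interval exchange performs
along the word. The translations along factors of a 3iet word are bounded, so if arbitrarily high
powers of two words occur in a common 3iet word, the contents of their images under a 3iet
preserving morphism `g` are proportional. The pairs `(AC, B)` and `(ACC, BC)` have this property,
and together they force the images of `B` and `AC` to have the same content.

The morphism `A ↦ AC`, `B ↦ Bᵗ⁺¹C`, `C ↦ BᵗC` is 3iet preserving, because it codes the returns of an
exchange to an initial interval on which the induced map is again an exchange. If it factors as
`f ∘ g`, with `f` nonerasing and such that `f B` and `f (AC)` have the same content, then `f` is
letter-to-letter or `g B` is a single letter. In a product of 3iet preserving morphisms equal to it,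
some factor therefore has a letter image of length `t + 2`, whereas letter images are bounded in a
finite set of morphisms.
-/

/-! ### Contents of words -/

/-- The numbers of `0`s and `1`s in the binary image of a letter under `A ↦ 0`, `B ↦ 01`,
`C ↦ 1`. -/
def letterContent : Letter → ℤ × ℤ
  | .A => (1, 0)
  | .B => (1, 1)
  | .C => (0, 1)

/-- The numbers of `0`s and `1`s in the binary image of a word under `A ↦ 0`, `B ↦ 01`, `C ↦ 1`;
up to the scalars `β + γ` and `-(α + β)`, these are the coordinates of the translation that an
interval exchange performs along the word. -/
def content (l : List Letter) : ℤ × ℤ := (l.map letterContent).sum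

@[simp] lemma content_nil : content [] = 0 := rfl

@[simp] lemma content_cons (a : Letter) (l : List Letter) :
    content (a :: l) = letterContent a + content l := by
  simp [content]

@[simp] lemma content_append (l₁ l₂ : List Letter) :
    content (l₁ ++ l₂) = content l₁ + content l₂ := by
  simp [content]

@[simp] lemma content_flatten_replicate (n : ℕ) (l : List Letter) :
    content (List.replicate n l).flatten = n • content l := by
  induction n with
  | zero => simp
  | succ n ih =>
    rw [List.replicate_succ, List.flatten_cons, content_append, ih, succ_nsmul, add_comm]

lemma content_flatMap (f : Morph) (l : List Letter) :
    content (l.flatMap f) = (l.map fun a => content (f a)).sum := by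
  induction l with
  | nil => rfl
  | cons a l ih => simp [ih]

lemma content_nonneg (l : List Letter) : 0 ≤ content l :=
  List.sum_nonneg fun p hp => by
    obtain ⟨a, -, rfl⟩ := List.mem_map.mp hp
    cases a <;> decide

lemma length_add_count_B (l : List Letter) :
    (l.length + l.count .B : ℤ) = (content l).1 + (content l).2 := by
  induction l with
  | nil => rfl
  | cons a l ih => cases a <;> simp [letterContent] <;> linarith

lemma length_le_content (l : List Letter) : (l.length : ℤ) ≤ (content l).1 + (content l).2 := by
  linarith [length_add_count_B l, Int.natCast_nonneg (l.count .B)]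

lemma one_le_content {l : List Letter} (hl : l ≠ []) : 1 ≤ (content l).1 + (content l).2 :=
  le_trans (mod_cast List.length_pos_iff.mpr hl) (length_le_content l)

/-- The morphisms `g` for which the content of `g w` depends only, and then linearly, on the content
of `w`: as `B` has the content of `AC`, so must have its image. -/
def ContentLinear (g : Morph) : Prop :=
  content (g .B) = content (g .A) + content (g .C)

lemma ContentLinear.content_flatMap {f : Morph} (hf : ContentLinear f) (l : List Letter) :
    content (l.flatMap f) =
      (content l).1 • content (f .A) + (content l).2 • content (f .C) := by
  induction l with
  | nil => simp
  | cons a l ih =>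
    have hB : content (f .B) = content (f .A) + content (f .C) := hf
    cases a <;> simp [ih, letterContent, add_smul, hB] <;> abel

lemma contentLinear_idM : ContentLinear idM := rfl

lemma compM_apply (f g : Morph) (a : Letter) : compM f g a = (g a).flatMap f :=
  List.flatMap_def.symm

lemma idM_compM (f : Morph) : compM idM f = f := by
  funext a
  rw [compM_apply]
  exact List.flatMap_singleton' (f a)

lemma compM_assoc (f g h : Morph) : compM (compM f g) h = compM f (compM g h) := by
  funext a
  simp only [compM_apply, List.flatMap_assoc]
  rfl

lemma compM_ne_nil {f g : Morph} (hf : ∀ a, f a ≠ []) (hg : ∀ a, g a ≠ []) (a : Letter) :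
    compM f g a ≠ [] := by
  obtain ⟨b, hb⟩ := List.exists_mem_of_ne_nil _ (hg a)
  rw [compM_apply, Ne, List.flatMap_eq_nil_iff]
  exact fun h => hf b (h b hb)

lemma ContentLinear.compM {f g : Morph} (hf : ContentLinear f) (hg : ContentLinear g) :
    ContentLinear (compM f g) := by
  have hB : content (g .B) = content (g .A) + content (g .C) := hg
  simp only [ContentLinear, compM_apply, hf.content_flatMap, hB, Prod.fst_add, Prod.snd_add,
    add_smul]
  abel

/-! ### The morphisms `theta t` and their factorizations -/

/-- The morphism `A ↦ AC`, `B ↦ Bᵗ⁺¹C`, `C ↦ BᵗC`. -/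
def theta (t : ℕ) : Morph
  | .A => [.A, .C]
  | .B => List.replicate (t + 1) .B ++ [.C]
  | .C => List.replicate t .B ++ [.C]

lemma theta_ne_nil (t : ℕ) (a : Letter) : theta t a ≠ [] := by
  cases a <;> simp [theta]

/-- The difference between the numbers of `C`s and of `A`s in a word, as a function of its
content. -/
def excess : ℤ × ℤ →+ ℤ := AddMonoidHom.snd ℤ ℤ - AddMonoidHom.fst ℤ ℤ

lemma excess_content_theta_B (t : ℕ) : excess (content (theta t .B)) = 1 := by
  simp [theta, content, excess, letterContent]

lemma excess_content_flatMap {f : Morph} {l : List Letter} {r : ℤ}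
    (h : ∀ a ∈ l, excess (content (f a)) = r) :
    excess (content (l.flatMap f)) = l.length * r := by
  rw [content_flatMap, map_list_sum, List.map_map, List.sum_eq_card_nsmul _ r (by simpa using h)]
  simp

/-- If the content `(1, 1)` of `AC` were that of `f B`, then `f A` and `f C` would share it, leaving
no room for a `B`. -/
lemma ne_B_of_apply_eq_AC {f : Morph} (hf : ∀ a, f a ≠ []) (hlin : ContentLinear f) {x : Letter}
    (hx : f x = [.A, .C]) (hB : ∃ z, .B ∈ f z) : x ≠ .B := by
  rintro rfl
  have hsize : (content (f .A)).1 + (content (f .A)).2 +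
      ((content (f .C)).1 + (content (f .C)).2) = 2 := by
    have hsum : content (f .A) + content (f .C) = (1, 1) := by rw [← hlin, hx]; rfl
    have hfst : (content (f .A)).1 + (content (f .C)).1 = 1 := congrArg Prod.fst hsum
    have hsnd : (content (f .A)).2 + (content (f .C)).2 = 1 := congrArg Prod.snd hsum
    omega
  have hA := one_le_content (hf .A)
  have hC := one_le_content (hf .C)
  have hnoB {y : Letter} (hy : (content (f y)).1 + (content (f y)).2 = 1) : .B ∉ f y := by
    have := length_add_count_B (f y)
    have := List.length_pos_iff.mpr (hf y)
    rw [← List.count_eq_zero]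
    omega
  obtain ⟨z, hz⟩ := hB
  cases z
  · exact hnoB (by omega) hz
  · simp [hx] at hz
  · exact hnoB (by omega) hz

/-- As `f x` has excess `0`, linearity gives the images of the two other letters the same excess
`r`, and `l.length * r = 1` forces `l.length = 1`. -/
lemma exists_eq_singleton_of_apply_eq_AC {f : Morph} (hf : ∀ a, f a ≠ []) (hlin : ContentLinear f)
    {x : Letter} (hx : f x = [.A, .C]) (hB : ∃ z, .B ∈ f z) {l : List Letter} (hxl : x ∉ l)
    (hl : excess (content (l.flatMap f)) = 1) : ∃ b, l = [b] := by
  have hx0 : excess (content (f x)) = 0 := by rw [hx]; rfl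
  have hxB : x ≠ .B := ne_B_of_apply_eq_AC hf hlin hx hB
  have hexcess : excess (content (f .B)) = excess (content (f .A)) + excess (content (f .C)) := by
    rw [← map_add, hlin]
  have hconst : ∀ a ∈ l, excess (content (f a)) = excess (content (f .B)) := by
    intro a ha
    have hax : a ≠ x := fun h => hxl (h ▸ ha)
    cases a <;> cases x <;> first | contradiction | omega
  rw [excess_content_flatMap hconst] at hl
  exact List.length_eq_one_iff.mp (mod_cast Int.eq_one_of_mul_eq_one_right (by positivity) hl)

lemma length_eq_one_of_apply_eq_A_of_apply_eq_C {f : Morph} (hf : ∀ a, f a ≠ [])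
    (hlin : ContentLinear f) {x y : Letter} (hx : f x = [.A]) (hy : f y = [.C])
    (hB : ∃ z, .B ∈ f z) (a : Letter) : (f a).length = 1 := by
  have hcontent : content (f .B) = content (f .A) + content (f .C) := hlin
  have hsize := congrArg (fun p : ℤ × ℤ => p.1 + p.2) hcontent
  simp only [Prod.fst_add, Prod.snd_add] at hsize
  have hA := one_le_content (hf .A)
  have hC := one_le_content (hf .C)
  have hxB : x ≠ .B := by rintro rfl; simp [hx, letterContent] at hsize; omega
  have hyB : y ≠ .B := by rintro rfl; simp [hy, letterContent] at hsize; omega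
  have hxy : x ≠ y := by rintro rfl; simp [hx] at hy
  have hfA : (f .A).length = 1 ∧ .B ∉ f .A ∧ (content (f .A)).1 + (content (f .A)).2 = 1 := by
    cases x <;> cases y <;> simp_all [letterContent]
  have hfC : (f .C).length = 1 ∧ .B ∉ f .C ∧ (content (f .C)).1 + (content (f .C)).2 = 1 := by
    cases x <;> cases y <;> simp_all [letterContent]
  have hfB : .B ∈ f .B := by
    obtain ⟨z, hz⟩ := hB
    cases z
    exacts [absurd hz hfA.2.1, hz, absurd hz hfC.2.1]
  cases a
  · exact hfA.1
  · have := length_add_count_B (f .B)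
    have := List.count_pos_iff.mpr hfB
    have := List.length_pos_iff.mpr (hf .B)
    omega
  · exact hfC.1

lemma flatMap_eq_pair {σ τ : Type*} {f : σ → List τ} (hf : ∀ a, f a ≠ []) {l : List σ} {a b : τ}
    (h : l.flatMap f = [a, b]) :
    (∃ x, f x = [a, b]) ∨ ∃ x y, f x = [a] ∧ f y = [b] := by
  match l with
  | [] => simp at h
  | [x] => exact .inl ⟨x, by simpa using h⟩
  | x :: y :: l =>
    obtain ⟨p, l₁, hx⟩ := List.exists_cons_of_ne_nil (hf x)
    obtain ⟨q, l₂, hy⟩ := List.exists_cons_of_ne_nil (hf y)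
    cases l₁ with
    | nil => exact .inr ⟨x, y, by simp_all, by simp_all⟩
    | cons => simp_all

lemma theta_irreducible {t : ℕ} (ht : t ≠ 0) {f g : Morph} (hf : ∀ a, f a ≠ [])
    (hlin : ContentLinear f) (h : compM f g = theta t) :
    (∀ a, (f a).length = 1) ∨ ∃ b, g .B = [b] := by
  have happly (a : Letter) : (g a).flatMap f = theta t a := by rw [← h, compM_apply]
  have hB : ∃ z, .B ∈ f z := by
    have : .B ∈ (g .C).flatMap f := by simp [happly, theta, ht]
    obtain ⟨z, -, hz⟩ := List.mem_flatMap.mp this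
    exact ⟨z, hz⟩
  rcases flatMap_eq_pair hf (happly .A) with ⟨x, hx⟩ | ⟨x, y, hx, hy⟩
  · have hxB : x ∉ g .B := fun hmem => by
      have : .A ∈ (g .B).flatMap f := List.mem_flatMap.mpr ⟨x, hmem, by simp [hx]⟩
      simp [happly, theta] at this
    exact .inr (exists_eq_singleton_of_apply_eq_AC hf hlin hx hB hxB
      (by rw [happly, excess_content_theta_B]))
  · exact .inl (length_eq_one_of_apply_eq_A_of_apply_eq_C hf hlin hx hy hB)

lemma length_compM_of_length_eq_one {f : Morph} (hf : ∀ a, (f a).length = 1) (g : Morph)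
    (a : Letter) : (compM f g a).length = (g a).length := by
  simp [compM_apply, List.length_flatMap, hf]

/-- Among the partial products, the first that is not a letter-to-letter morphism has a letter image
of length `t + 2`, and so does its last factor. -/
lemma exists_long_factor_of_compM_foldr_eq_theta {t : ℕ} (ht : t ≠ 0) (L : List Morph)
    (hL : ∀ ψ ∈ L, (∀ a, ψ a ≠ []) ∧ ContentLinear ψ) {f : Morph} (hlin : ContentLinear f)
    (hf : ∀ a, (f a).length = 1) (h : compM f (L.foldr compM idM) = theta t) :
    ∃ ψ ∈ L, ∃ a, (ψ a).length = t + 2 := by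
  induction L generalizing f with
  | nil =>
    have hlen := length_compM_of_length_eq_one hf idM .A
    rw [show compM f idM = theta t from h] at hlen
    simp [theta, idM] at hlen
  | cons φ L ih =>
    have hφ := hL φ List.mem_cons_self
    have hne : ∀ a, compM f φ a ≠ [] :=
      compM_ne_nil (fun a => List.ne_nil_of_length_eq_add_one (hf a)) hφ.1
    rw [List.foldr_cons, ← compM_assoc] at h
    rcases theta_irreducible ht hne (hlin.compM hφ.2) h with hone | ⟨b, hb⟩
    · obtain ⟨ψ, hψ, hlong⟩ :=
        ih (fun ψ hψ => hL ψ (List.mem_cons_of_mem φ hψ)) (hlin.compM hφ.2) hone h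
      exact ⟨ψ, List.mem_cons_of_mem φ hψ, hlong⟩
    · refine ⟨φ, List.mem_cons_self, b, ?_⟩
      have hlen : compM f φ b = theta t .B := by
        rw [← h, compM_apply (compM f φ), hb, List.flatMap_singleton]
      rw [← length_compM_of_length_eq_one hf φ b, hlen]
      simp [theta]

/-! ### Factors and images of biinfinite words -/

section Factors

variable {σ : Type*} {v : ℤ → σ} {l l₁ l₂ : List σ} {n : ℤ}

/-- The word `l` occurs in the biinfinite word `v` at position `n`. -/
def FactorAt (v : ℤ → σ) (n : ℤ) (l : List σ) : Prop :=
  ∀ (i : ℕ) (h : i < l.length), v (n + i) = l[i]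

/-- The finite word `l` is a factor of the biinfinite word `v`. -/
def IsFactor (l : List σ) (v : ℤ → σ) : Prop := ∃ n, FactorAt v n l

lemma factorAt_nil : FactorAt v n [] := by simp [FactorAt]

lemma factorAt_cons {a : σ} : FactorAt v n (a :: l) ↔ v n = a ∧ FactorAt v (n + 1) l := by
  have hshift (i : ℕ) : n + 1 + i = n + (i + 1 : ℕ) := by omega
  constructor
  · refine fun h => ⟨(congrArg v (by simp)).trans (h 0 (by simp)), fun i hi => ?_⟩
    rw [hshift]
    exact h (i + 1) (Nat.succ_lt_succ hi)
  · rintro ⟨h₀, h⟩ (_ | i) hi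
    · simpa using h₀
    · rw [← hshift]
      exact h i (Nat.lt_of_succ_lt_succ hi)

lemma factorAt_append :
    FactorAt v n (l₁ ++ l₂) ↔ FactorAt v n l₁ ∧ FactorAt v (n + l₁.length) l₂ := by
  induction l₁ generalizing n with
  | nil => simp [factorAt_nil]
  | cons a l₁ ih => simp [factorAt_cons, ih, and_assoc, add_assoc, add_comm (1 : ℤ)]

lemma IsFactor.left_of_append (h : IsFactor (l₁ ++ l₂) v) : IsFactor l₁ v :=
  h.imp fun _ h => (factorAt_append.mp h).1

lemma IsFactor.right_of_append (h : IsFactor (l₁ ++ l₂) v) : IsFactor l₂ v :=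
  let ⟨_, h⟩ := h
  ⟨_, (factorAt_append.mp h).2⟩

lemma exists_isFactor_length_eq (v : ℤ → σ) (k : ℕ) : ∃ l, IsFactor l v ∧ l.length = k :=
  ⟨List.ofFn fun i : Fin k => v i, ⟨0, by simp [FactorAt]⟩, by simp⟩

lemma existsUnique_mem_Ico_of_strictMono {c : ℤ → ℤ} (hc : StrictMono c) (n : ℤ) :
    ∃! m, n ∈ Set.Ico (c m) (c (m + 1)) := by
  refine existsUnique_of_exists_of_unique ?_ fun m m' hm hm' => ?_
  · have hmono : Monotone fun m => c m - m := monotone_int_of_le_succ fun m => by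
      have : c m < c (m + 1) := hc (lt_add_one m)
      omega
    obtain ⟨m, hm, hmax⟩ := Int.exists_greatest_of_bdd (P := fun m => c m ≤ n)
      ⟨|n - c 0|, fun m hm => by
        by_contra! hlt
        have : c 0 - 0 ≤ c m - m := hmono ((abs_nonneg _).trans hlt.le)
        linarith [le_abs_self (n - c 0)]⟩
      ⟨-|n - c 0|, by
        have : c (-|n - c 0|) - -|n - c 0| ≤ c 0 - 0 := hmono (neg_nonpos.mpr (abs_nonneg _))
        linarith [neg_abs_le (n - c 0)]⟩
    exact ⟨m, hm, lt_of_not_ge fun h => (lt_add_one m).not_ge (hmax _ h)⟩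
  · by_contra hne
    exact Set.disjoint_left.mp (hc.monotone.pairwise_disjoint_on_Ico_succ hne) hm hm'

lemma strictMono_of_add_length {b : ℤ → List σ} (hb : ∀ m, b m ≠ []) {c : ℤ → ℤ}
    (hc : ∀ m, c (m + 1) = c m + (b m).length) : StrictMono c :=
  strictMono_int_of_lt_succ fun m => by
    have := List.length_pos_iff.mpr (hb m)
    rw [hc]
    omega

lemma existsUnique_factorAt_blocks {b : ℤ → List σ} (hb : ∀ m, b m ≠ []) {c : ℤ → ℤ}
    (hc : ∀ m, c (m + 1) = c m + (b m).length) : ∃! v : ℤ → σ, ∀ m, FactorAt v (c m) (b m) := by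
  have hletter (n : ℤ) :
      ∃! a, ∀ (m : ℤ) (i : ℕ) (h : i < (b m).length), c m + i = n → a = (b m)[i] := by
    obtain ⟨k, ⟨hk, hk'⟩, hunique⟩ :=
      existsUnique_mem_Ico_of_strictMono (strictMono_of_add_length hb hc) n
    obtain ⟨j, rfl⟩ := Int.le.dest hk
    have hj : j < (b k).length := by rw [hc] at hk'; omega
    refine ⟨(b k)[j], fun m i hi h => ?_, fun a ha => ha k j hj rfl⟩
    obtain rfl : m = k := hunique m ⟨by omega, by rw [hc]; omega⟩
    obtain rfl : i = j := by omega
    rfl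
  choose v hv hunique using hletter
  refine ⟨v, fun m i hi => hv _ m i hi rfl, fun w hw => funext fun n => hunique n _ ?_⟩
  rintro m i hi rfl
  exact hw m i hi

lemma exists_int_primitive (d : ℤ → ℤ) : ∃ c : ℤ → ℤ, c 0 = 0 ∧ ∀ m, c (m + 1) = c m + d m := by
  refine ⟨fun m => ∑ i ∈ Finset.Ico 0 m, d i - ∑ i ∈ Finset.Ico m 0, d i, by simp, fun m => ?_⟩
  beta_reduce
  rcases le_or_gt 0 m with h | h
  · rw [Finset.Ico_eq_empty_of_le h, Finset.Ico_eq_empty_of_le (h.trans (lt_add_one m).le),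
      ← Finset.insert_Ico_right_eq_Ico_add_one h]
    simp [add_comm]
  · simp [Finset.Ico_eq_empty_of_le, h.le, Int.add_one_le_of_lt h,
      ← Finset.insert_Ico_add_one_left_eq_Ico h]

lemma flatMap_flatten_replicate {τ : Type*} (g : σ → List τ) (k : ℕ) (l : List σ) :
    (List.replicate k l).flatten.flatMap g = (List.replicate k (l.flatMap g)).flatten := by
  induction k with
  | zero => rfl
  | succ k ih => simp only [List.replicate_succ, List.flatten_cons, List.flatMap_append, ih]

end Factors

section ImageWords

variable {φ : Morph} {u v : ℤ → Letter}

lemma exists_isImageWord (hφ : ∀ a, φ a ≠ []) (u : ℤ → Letter) : ∃ v, IsImageWord φ u v := by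
  obtain ⟨c, hc₀, hc⟩ := exists_int_primitive fun m => (φ (u m)).length
  obtain ⟨v, hv, -⟩ := existsUnique_factorAt_blocks (fun m => hφ (u m)) hc
  exact ⟨v, c, hc₀, hc, hv⟩

lemma IsImageWord.isFactor_flatMap (hv : IsImageWord φ u v) {l : List Letter}
    (hl : IsFactor l u) : IsFactor (l.flatMap φ) v := by
  obtain ⟨c, -, hc, hblock⟩ := hv
  obtain ⟨m, hm⟩ := hl
  refine ⟨c m, ?_⟩
  induction l generalizing m with
  | nil => exact factorAt_nil
  | cons a l ih =>
    obtain ⟨rfl, hl⟩ := factorAt_cons.mp hm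
    rw [List.flatMap_cons, factorAt_append, ← hc]
    exact ⟨hblock m, ih (m + 1) hl⟩

lemma IsImageWord.isFactor_flatten_replicate (hv : IsImageWord φ u v) {k : ℕ} {l : List Letter}
    (hl : IsFactor (List.replicate k l).flatten u) :
    IsFactor (List.replicate k (l.flatMap φ)).flatten v := by
  rw [← flatMap_flatten_replicate]
  exact hv.isFactor_flatMap hl

end ImageWords

/-! ### Coded orbits -/

section CodedOrbits

variable {X σ : Type*} {f : X → X} {code : X → σ} {x y z : X} {l l₁ l₂ : List σ}

/-- A biinfinite orbit of the self-map `f`. -/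
def IsOrbit (f : X → X) (Z : ℤ → X) : Prop := ∀ n, Z (n + 1) = f (Z n)

/-- Iterating `f` from `x`, the points visited before reaching `y` are coded by the word `l`. -/
def CodedPath (f : X → X) (code : X → σ) : X → List σ → X → Prop
  | x, [], y => x = y
  | x, a :: l, y => code x = a ∧ CodedPath f code (f x) l y

lemma CodedPath.append (h₁ : CodedPath f code x l₁ y) (h₂ : CodedPath f code y l₂ z) :
    CodedPath f code x (l₁ ++ l₂) z := by
  induction l₁ generalizing x with
  | nil => exact (show x = y from h₁) ▸ h₂
  | cons a l₁ ih => exact ⟨h₁.1, ih h₁.2⟩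

lemma CodedPath.iterate_eq (h : CodedPath f code x l y) : f^[l.length] x = y := by
  induction l generalizing x with
  | nil => exact h
  | cons a l ih => exact ih h.2

lemma CodedPath.flatten_replicate {p : ℕ → X} {k : ℕ}
    (h : ∀ i < k, CodedPath f code (p i) l (p (i + 1))) :
    CodedPath f code (p 0) (List.replicate k l).flatten (p k) := by
  induction k with
  | zero => rfl
  | succ k ih =>
    rw [List.replicate_succ', List.flatten_append, List.flatten_singleton]
    exact (ih fun i hi => h i (hi.trans k.lt_succ_self)).append (h k k.lt_succ_self)

lemma IsOrbit.iterate_eq {Z : ℤ → X} (hZ : IsOrbit f Z) (n : ℤ) (k : ℕ) :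
    f^[k] (Z n) = Z (n + k) := by
  induction k with
  | zero => simp
  | succ k ih => rw [Function.iterate_succ_apply', ih, ← hZ, Nat.cast_succ, add_assoc]

lemma CodedPath.factorAt {Z : ℤ → X} (hZ : IsOrbit f Z) {n : ℤ}
    (h : CodedPath f code (Z n) l y) : FactorAt (code ∘ Z) n l := by
  induction l generalizing n with
  | nil => exact factorAt_nil
  | cons a l ih => exact factorAt_cons.mpr ⟨h.1, ih (by rw [hZ]; exact h.2)⟩

/-- The sequence `Y` need not be the orbit of a map: it is a subsequence of `Z`, and the image of
`u` lists the letters coding `Z` between its successive terms. -/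
lemma IsImageWord.eq_code_comp_orbit {φ : Morph} (hφ : ∀ a, φ a ≠ []) {u v : ℤ → Letter}
    (hv : IsImageWord φ u v) {code : X → Letter} {D : Set X} (hmaps : Set.MapsTo f D D)
    (hinj : Set.InjOn f D) {Y Z : ℤ → X} (hY : ∀ m, Y m ∈ D)
    (hpath : ∀ m, CodedPath f code (Y m) (φ (u m)) (Y (m + 1)))
    (hZ : IsOrbit f Z) (hZmem : ∀ n, Z n ∈ D) (h₀ : Z 0 = Y 0) : v = code ∘ Z := by
  obtain ⟨c, hc₀, hc, hblock⟩ := hv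
  have hreturn (m : ℤ) : Z (c m) = Y m ↔ Z (c (m + 1)) = Y (m + 1) := by
    rw [hc, ← hZ.iterate_eq, ← (hpath m).iterate_eq]
    exact ((hinj.iterate hmaps _).eq_iff (hZmem _) (hY m)).symm
  have hZc (m : ℤ) : Z (c m) = Y m := by
    induction m with
    | zero => rw [hc₀, h₀]
    | succ i ih => exact (hreturn i).mp ih
    | pred i ih => exact (hreturn (-i - 1)).mpr (by rwa [sub_add_cancel])
  refine (existsUnique_factorAt_blocks (fun m => hφ (u m)) hc).unique hblock fun m => ?_
  exact CodedPath.factorAt hZ (by rw [hZc]; exact hpath m)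

end CodedOrbits

section ZIter

variable {f g : ℝ → ℝ} {D : Set ℝ} {x : ℝ}

lemma zIter_mem (hf : Set.MapsTo f D D) (hg : Set.MapsTo g D D) (hx : x ∈ D) :
    ∀ n : ℤ, zIter f g n x ∈ D
  | Int.ofNat n => hf.iterate n hx
  | Int.negSucc n => hg.iterate (n + 1) hx

lemma isOrbit_zIter (hg : Set.MapsTo g D D) (hfg : Set.RightInvOn g f D) (hx : x ∈ D) :
    IsOrbit f fun n => zIter f g n x
  | Int.ofNat n => Function.iterate_succ_apply' f n x
  | Int.negSucc 0 => (hfg hx).symm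
  | Int.negSucc (n + 1) => by
    change g^[n + 1] x = f (g^[n + 1 + 1] x)
    rw [Function.iterate_succ_apply' g (n + 1), hfg (hg.iterate (n + 1) hx)]

end ZIter

/-! ### Interval exchange transformations -/

/-- The convention for the endpoints of the intervals exchanged. -/
inductive Convention : Type
  | leftClosed | rightClosed

namespace Convention

/-- The point `x` lies in an interval to the left of the boundary point `y`; the boundary point
itself does so in the right-closed convention only. -/
def Before : Convention → ℝ → ℝ → Prop
  | leftClosed, x, y => x < y
  | rightClosed, x, y => x ≤ y

noncomputable instance : ∀ (κ : Convention) (x y : ℝ), Decidable (κ.Before x y)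
  | leftClosed, x, y => inferInstanceAs (Decidable (x < y))
  | rightClosed, x, y => inferInstanceAs (Decidable (x ≤ y))

/-- The half-open interval from `0` to `s`. -/
def domain (κ : Convention) (s : ℝ) : Set ℝ := {x | ¬ κ.Before x 0 ∧ κ.Before x s}

variable (κ : Convention)

/-- `Tleft` or `Tright`, according to the convention. -/
noncomputable def exchange (α β γ x : ℝ) : ℝ :=
  if κ.Before x α then x + β + γ else if κ.Before x (α + β) then x - α + γ else x - α - β

/-- `TleftInv` or `TrightInv`, according to the convention. -/
noncomputable def exchangeInv (α β γ x : ℝ) : ℝ :=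
  if κ.Before x γ then x + α + β else if κ.Before x (β + γ) then x + α - γ else x - β - γ

/-- `codeLeft` or `codeRight`, according to the convention. -/
noncomputable def code (α β x : ℝ) : Letter :=
  if κ.Before x α then .A else if κ.Before x (α + β) then .B else .C

/-- The biinfinite orbit of `x` under the exchange. -/
noncomputable def orbit (α β γ x : ℝ) (n : ℤ) : ℝ :=
  zIter (κ.exchange α β γ) (κ.exchangeInv α β γ) n x

end Convention

lemma is3ietWord_iff {u : ℤ → Letter} :
    Is3ietWord u ↔ ∃ (κ : Convention) (α β γ x : ℝ), 0 < α ∧ 0 < β ∧ 0 < γ ∧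
      LinearIndependent ℚ ![α + β, β + γ] ∧ x ∈ κ.domain (α + β + γ) ∧
      u = κ.code α β ∘ κ.orbit α β γ x := by
  constructor
  · rintro ⟨α, β, γ, x, hα, hβ, hγ, hindep, ⟨hx, rfl⟩ | ⟨hx, rfl⟩⟩
    · exact ⟨.leftClosed, α, β, γ, x, hα, hβ, hγ, hindep, ⟨hx.1.not_gt, hx.2⟩, rfl⟩
    · exact ⟨.rightClosed, α, β, γ, x, hα, hβ, hγ, hindep, ⟨hx.1.not_ge, hx.2⟩, rfl⟩
  · rintro ⟨κ | κ, α, β, γ, x, hα, hβ, hγ, hindep, hx, rfl⟩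
    · exact ⟨α, β, γ, x, hα, hβ, hγ, hindep, .inl ⟨⟨not_lt.mp hx.1, hx.2⟩, rfl⟩⟩
    · exact ⟨α, β, γ, x, hα, hβ, hγ, hindep, .inr ⟨⟨not_le.mp hx.1, hx.2⟩, rfl⟩⟩

namespace Convention

variable {κ : Convention} {α β γ x y z : ℝ}

lemma Before.le (h : κ.Before x y) : x ≤ y := by
  cases κ
  exacts [le_of_lt h, h]

lemma le_of_not_before (h : ¬ κ.Before x y) : y ≤ x := by
  cases κ
  exacts [not_lt.mp h, (not_le.mp h).le]

lemma Before.of_sub_le_sub {x' y' : ℝ} (h : κ.Before x y) (hle : x' - y' ≤ x - y) :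
    κ.Before x' y' := by
  cases κ
  · have : x < y := h
    exact show x' < y' by linarith
  · have : x ≤ y := h
    exact show x' ≤ y' by linarith

lemma mapsTo_exchange (hα : 0 ≤ α) (hβ : 0 ≤ β) (hγ : 0 ≤ γ) :
    Set.MapsTo (κ.exchange α β γ) (κ.domain (α + β + γ)) (κ.domain (α + β + γ)) := by
  rintro x ⟨hx₀, hx⟩
  unfold exchange
  split_ifs with hA hB
  · exact ⟨mt (·.of_sub_le_sub (by linarith)) hx₀, hA.of_sub_le_sub (by linarith)⟩
  · exact ⟨mt (·.of_sub_le_sub (by linarith)) hA, hB.of_sub_le_sub (by linarith)⟩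
  · exact ⟨mt (·.of_sub_le_sub (by linarith)) hB, hx.of_sub_le_sub (by linarith)⟩

lemma mapsTo_exchangeInv (hα : 0 ≤ α) (hβ : 0 ≤ β) (hγ : 0 ≤ γ) :
    Set.MapsTo (κ.exchangeInv α β γ) (κ.domain (α + β + γ)) (κ.domain (α + β + γ)) := by
  rintro x ⟨hx₀, hx⟩
  unfold exchangeInv
  split_ifs with hC hB
  · exact ⟨mt (·.of_sub_le_sub (by linarith)) hx₀, hC.of_sub_le_sub (by linarith)⟩
  · exact ⟨mt (·.of_sub_le_sub (by linarith)) hC, hB.of_sub_le_sub (by linarith)⟩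
  · exact ⟨mt (·.of_sub_le_sub (by linarith)) hB, hx.of_sub_le_sub (by linarith)⟩

lemma leftInvOn_exchangeInv (hβ : 0 ≤ β) :
    Set.LeftInvOn (κ.exchangeInv α β γ) (κ.exchange α β γ) (κ.domain (α + β + γ)) := by
  rintro x ⟨hx₀, hx⟩
  unfold exchange
  split_ifs with hA hB
  · rw [exchangeInv, if_neg (mt (·.of_sub_le_sub (by linarith)) hx₀),
      if_neg (mt (·.of_sub_le_sub (by linarith)) hx₀)]
    ring
  · rw [exchangeInv, if_neg (mt (·.of_sub_le_sub (by linarith)) hA),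
      if_pos (hB.of_sub_le_sub (by linarith))]
    ring
  · rw [exchangeInv, if_pos (hx.of_sub_le_sub (by linarith))]
    ring

lemma rightInvOn_exchangeInv (hβ : 0 ≤ β) :
    Set.RightInvOn (κ.exchangeInv α β γ) (κ.exchange α β γ) (κ.domain (α + β + γ)) := by
  rintro x ⟨hx₀, hx⟩
  unfold exchangeInv
  split_ifs with hC hB
  · rw [exchange, if_neg (mt (·.of_sub_le_sub (by linarith)) hx₀),
      if_neg (mt (·.of_sub_le_sub (by linarith)) hx₀)]
    ring
  · rw [exchange, if_neg (mt (·.of_sub_le_sub (by linarith)) hC),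
      if_pos (hB.of_sub_le_sub (by linarith))]
    ring
  · rw [exchange, if_pos (hx.of_sub_le_sub (by linarith))]
    ring

lemma orbit_mem (hα : 0 ≤ α) (hβ : 0 ≤ β) (hγ : 0 ≤ γ) (hx : x ∈ κ.domain (α + β + γ)) (n : ℤ) :
    κ.orbit α β γ x n ∈ κ.domain (α + β + γ) :=
  zIter_mem (mapsTo_exchange hα hβ hγ) (mapsTo_exchangeInv hα hβ hγ) hx n

lemma isOrbit_orbit (hα : 0 ≤ α) (hβ : 0 ≤ β) (hγ : 0 ≤ γ) (hx : x ∈ κ.domain (α + β + γ)) :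
    IsOrbit (κ.exchange α β γ) (κ.orbit α β γ x) :=
  isOrbit_zIter (mapsTo_exchangeInv hα hβ hγ) (rightInvOn_exchangeInv hβ) hx

lemma codedPath_A (h : κ.Before x α) :
    CodedPath (κ.exchange α β γ) (κ.code α β) x [.A] (x + β + γ) :=
  ⟨if_pos h, if_pos h⟩

lemma codedPath_B (hα : ¬ κ.Before x α) (hβ : κ.Before x (α + β)) :
    CodedPath (κ.exchange α β γ) (κ.code α β) x [.B] (x - α + γ) :=
  ⟨(if_neg hα).trans (if_pos hβ), (if_neg hα).trans (if_pos hβ)⟩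

lemma codedPath_C (hβ : 0 ≤ β) (h : ¬ κ.Before x (α + β)) :
    CodedPath (κ.exchange α β γ) (κ.code α β) x [.C] (x - α - β) :=
  have hα : ¬ κ.Before x α := mt (·.of_sub_le_sub (by linarith)) h
  ⟨(if_neg hα).trans (if_neg h), (if_neg hα).trans (if_neg h)⟩

lemma codedPath_AC (hαγ : α ≤ γ) (hβ : 0 ≤ β) (hx₀ : ¬ κ.Before x 0) (hx : κ.Before x α) :
    CodedPath (κ.exchange α β γ) (κ.code α β) x [.A, .C] (x + γ - α) := by
  have hC := codedPath_C (κ := κ) (α := α) (γ := γ) (x := x + β + γ) hβ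
    (mt (·.of_sub_le_sub (by linarith)) hx₀)
  rw [show x + γ - α = x + β + γ - α - β by ring]
  exact (codedPath_A hx).append hC

lemma codedPath_replicate_AC {k : ℕ} (hαγ : α ≤ γ) (hβ : 0 ≤ β) (hx : ¬ κ.Before x 0)
    (hlast : ∀ i < k, κ.Before (x + i * (γ - α)) α) :
    CodedPath (κ.exchange α β γ) (κ.code α β) x (List.replicate k [.A, .C]).flatten
      (x + k * (γ - α)) := by
  have hstep : ∀ i < k, CodedPath (κ.exchange α β γ) (κ.code α β) (x + i * (γ - α)) [.A, .C]
      (x + (i + 1 : ℕ) * (γ - α)) := fun i hi => by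
    have hnonneg : 0 ≤ i * (γ - α) := mul_nonneg i.cast_nonneg (by linarith)
    rw [show x + (i + 1 : ℕ) * (γ - α) = x + i * (γ - α) + γ - α by push_cast; ring]
    exact codedPath_AC hαγ hβ (mt (·.of_sub_le_sub (by linarith)) hx) (hlast i hi)
  simpa using CodedPath.flatten_replicate hstep

lemma codedPath_replicate_B {k : ℕ} (hαγ : α ≤ γ) (hx : ¬ κ.Before x α)
    (hlast : ∀ i < k, κ.Before (x + i * (γ - α)) (α + β)) :
    CodedPath (κ.exchange α β γ) (κ.code α β) x (List.replicate k .B) (x + k * (γ - α)) := by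
  have hstep : ∀ i < k, CodedPath (κ.exchange α β γ) (κ.code α β) (x + i * (γ - α)) [.B]
      (x + (i + 1 : ℕ) * (γ - α)) := fun i hi => by
    have hnonneg : 0 ≤ i * (γ - α) := mul_nonneg i.cast_nonneg (by linarith)
    rw [show x + (i + 1 : ℕ) * (γ - α) = x + i * (γ - α) - α + γ by push_cast; ring]
    exact codedPath_B (mt (·.of_sub_le_sub (by linarith)) hx) (hlast i hi)
  simpa using CodedPath.flatten_replicate hstep

lemma codedPath_replicate_B_append_C {k : ℕ} (hαγ : α ≤ γ) (hβ : 0 ≤ β) (hx : ¬ κ.Before x α)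
    (hlast : ∀ i < k, κ.Before (x + i * (γ - α)) (α + β))
    (hend : ¬ κ.Before (x + k * (γ - α)) (α + β)) :
    CodedPath (κ.exchange α β γ) (κ.code α β) x (List.replicate k .B ++ [.C])
      (x + k * (γ - α) - α - β) :=
  (codedPath_replicate_B hαγ hx hlast).append (codedPath_C hβ hend)

end Convention

/-! ### The morphisms `theta t` preserve 3iet words -/

open Convention in
/-- The exchange with parameters `(α, β, γ)` is the first return map of the one with parameters
`(α, t (β + γ) + β, α + β + γ)` to an initial interval, and `theta t` codes the returns. -/
lemma codedPath_theta (κ : Convention) {α β γ x : ℝ} (hβ : 0 ≤ β) (hγ : 0 ≤ γ)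
    (hx : x ∈ κ.domain (α + β + γ)) (t : ℕ) :
    CodedPath (κ.exchange α (t * (β + γ) + β) (α + β + γ)) (κ.code α (t * (β + γ) + β)) x
      (theta t (κ.code α β x)) (κ.exchange α β γ x) := by
  set β' := t * (β + γ) + β with hβ'
  set γ' := α + β + γ with hγ'
  have hβγ : 0 ≤ β + γ := add_nonneg hβ hγ
  have hβ'₀ : 0 ≤ β' := by rw [hβ']; positivity
  have hαγ' : α ≤ γ' := by linarith
  have hslope : γ' - α = β + γ := by rw [hγ']; ring
  by_cases hA : κ.Before x α
  · rw [show κ.code α β x = .A from if_pos hA,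
      show κ.exchange α β γ x = x + γ' - α from (if_pos hA).trans (by linarith)]
    exact codedPath_AC hαγ' hβ'₀ hx.1 hA
  by_cases hB : κ.Before x (α + β)
  · rw [show κ.code α β x = .B from (if_neg hA).trans (if_pos hB),
      show κ.exchange α β γ x = x + (t + 1 : ℕ) * (γ' - α) - α - β' from
        ((if_neg hA).trans (if_pos hB)).trans (by rw [hslope]; push_cast; linarith)]
    refine codedPath_replicate_B_append_C hαγ' hβ'₀ hA (fun i hi => hB.of_sub_le_sub ?_)
      (mt (·.of_sub_le_sub ?_) hA) <;> rw [hslope]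
    · have : (i : ℝ) ≤ t := mod_cast Nat.le_of_lt_succ hi
      linarith [mul_le_mul_of_nonneg_right this hβγ]
    · push_cast
      linarith
  · rw [show κ.code α β x = .C from (if_neg hA).trans (if_neg hB),
      show κ.exchange α β γ x = x + t * (γ' - α) - α - β' from
        ((if_neg hA).trans (if_neg hB)).trans (by rw [hslope]; linarith)]
    refine codedPath_replicate_B_append_C hαγ' hβ'₀ hA (fun i hi => hx.2.of_sub_le_sub ?_)
      (mt (·.of_sub_le_sub ?_) hB) <;> rw [hslope]
    · have : (i + 1 : ℝ) ≤ t := mod_cast hi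
      linarith [mul_le_mul_of_nonneg_right this hβγ]
    · linarith

lemma linearIndependent_pair_add_natCast_mul {a c : ℝ} (h : LinearIndependent ℚ ![a, c]) (t : ℕ) :
    LinearIndependent ℚ ![a + t * c, a + (t + 1) * c] := by
  have := (LinearIndependent.pair_add_smul_add_smul_iff (a := (1 : ℚ)) (b := t) (c := (1 : ℚ))
    (d := t + 1)).mpr ⟨h, by simp⟩
  simpa [Rat.smul_def] using this

open Convention in
lemma preserves3iet_theta (t : ℕ) : Preserves3iet (theta t) := by
  refine ⟨theta_ne_nil t, fun u v hu hv => ?_⟩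
  obtain ⟨κ, α, β, γ, x, hα, hβ, hγ, hindep, hx, rfl⟩ := is3ietWord_iff.mp hu
  have hβ' : 0 < t * (β + γ) + β := by positivity
  have hγ' : 0 < α + β + γ := by positivity
  have hdomain : κ.domain (α + β + γ) ⊆ κ.domain (α + (t * (β + γ) + β) + (α + β + γ)) :=
    fun y hy => ⟨hy.1, hy.2.of_sub_le_sub (by linarith)⟩
  refine is3ietWord_iff.mpr
    ⟨κ, α, t * (β + γ) + β, α + β + γ, x, hα, hβ', hγ', ?_, hdomain hx, ?_⟩
  · rw [show α + (t * (β + γ) + β) = α + β + t * (β + γ) by ring,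
      show t * (β + γ) + β + (α + β + γ) = α + β + (t + 1) * (β + γ) by ring]
    exact linearIndependent_pair_add_natCast_mul hindep t
  · refine hv.eq_code_comp_orbit (theta_ne_nil t)
      (mapsTo_exchange hα.le hβ'.le hγ'.le) (leftInvOn_exchangeInv hβ'.le).injOn
      (fun m => hdomain (orbit_mem hα.le hβ.le hγ.le hx m)) (fun m => ?_)
      (isOrbit_orbit hα.le hβ'.le hγ'.le (hdomain hx))
      (orbit_mem hα.le hβ'.le hγ'.le (hdomain hx)) rfl
    rw [isOrbit_orbit hα.le hβ.le hγ.le hx m]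
    exact codedPath_theta κ hβ.le hγ.le (orbit_mem hα.le hβ.le hγ.le hx m) t

/-! ### Contents of the factors of a 3iet word -/

/-- The translation that an exchange with `α + β = a` and `β + γ = c` performs along a word of
content `p`. -/
def displacement (a c : ℝ) : ℤ × ℤ →+ ℝ where
  toFun p := c * p.1 - a * p.2
  map_zero' := by simp
  map_add' p q := by push_cast [Prod.fst_add, Prod.snd_add]; ring

lemma displacement_apply (a c : ℝ) (p : ℤ × ℤ) : displacement a c p = c * p.1 - a * p.2 := rfl

lemma displacement_ne_zero {a c : ℝ} (h : LinearIndependent ℚ ![a, c]) {p : ℤ × ℤ} (hp : p ≠ 0) :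
    displacement a c p ≠ 0 := fun hzero => hp <| by
  have := LinearIndependent.pair_iff.mp h (-p.2) p.1 (by
    simp only [displacement_apply] at hzero
    simp only [Rat.smul_def]
    push_cast
    linarith)
  simpa [Prod.ext_iff, and_comm] using this

lemma Convention.exchange_eq_add_displacement (κ : Convention) (α β γ x : ℝ) :
    κ.exchange α β γ x =
      x + displacement (α + β) (β + γ) (letterContent (κ.code α β x)) := by
  unfold exchange code
  split_ifs <;> simp [displacement_apply, letterContent] <;> ring

lemma Convention.orbit_add_length {κ : Convention} {α β γ : ℝ} {Z : ℤ → ℝ}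
    (hZ : IsOrbit (κ.exchange α β γ) Z) {n : ℤ} {l : List Letter}
    (hl : FactorAt (κ.code α β ∘ Z) n l) :
    Z (n + l.length) = Z n + displacement (α + β) (β + γ) (content l) := by
  induction l generalizing n with
  | nil => simp
  | cons a l ih =>
    obtain ⟨rfl, htail⟩ := factorAt_cons.mp hl
    rw [List.length_cons, Nat.cast_succ, add_comm (l.length : ℤ), ← add_assoc, ih htail, hZ,
      κ.exchange_eq_add_displacement, content_cons, map_add, add_assoc]
    rfl

lemma Is3ietWord.exists_abs_displacement_le {v : ℤ → Letter} (hv : Is3ietWord v) :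
    ∃ a c : ℝ, 0 < a ∧ 0 < c ∧ LinearIndependent ℚ ![a, c] ∧
      ∀ l, IsFactor l v → |displacement a c (content l)| ≤ a + c := by
  obtain ⟨κ, α, β, γ, x, hα, hβ, hγ, hindep, hx, rfl⟩ := is3ietWord_iff.mp hv
  refine ⟨α + β, β + γ, by positivity, by positivity, hindep, ?_⟩
  rintro l ⟨n, hl⟩
  have hmem (m : ℤ) : 0 ≤ κ.orbit α β γ x m ∧ κ.orbit α β γ x m ≤ α + β + γ :=
    let h := Convention.orbit_mem hα.le hβ.le hγ.le hx m
    ⟨Convention.le_of_not_before h.1, h.2.le⟩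
  have hshift := Convention.orbit_add_length (Convention.isOrbit_orbit hα.le hβ.le hγ.le hx) hl
  obtain ⟨h₁, h₂⟩ := hmem n
  obtain ⟨h₃, h₄⟩ := hmem (n + l.length)
  rw [abs_le]
  constructor <;> linarith

/-- The determinant of two contents; it vanishes when they are proportional. -/
def cross (p q : ℤ × ℤ) : ℤ := p.1 * q.2 - p.2 * q.1

lemma add_mul_cross (a c : ℝ) (p q : ℤ × ℤ) :
    (a + c) * cross p q = (q.1 + q.2) * displacement a c p - (p.1 + p.2) * displacement a c q := by
  simp only [cross, displacement_apply]
  push_cast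
  ring

lemma cross_eq_zero_of_displacement_small {a c : ℝ} (ha : 0 < a) (hc : 0 < c) {p q : ℤ × ℤ}
    (hp : 0 ≤ p) (hq : 0 ≤ q) {k : ℕ} (hk : p.1 + p.2 + (q.1 + q.2) < k)
    (hkp : |displacement a c (k • p)| ≤ a + c) (hkq : |displacement a c (k • q)| ≤ a + c) :
    cross p q = 0 := by
  have hp' : (0 : ℝ) ≤ p.1 + p.2 := mod_cast add_nonneg hp.1 hp.2
  have hq' : (0 : ℝ) ≤ q.1 + q.2 := mod_cast add_nonneg hq.1 hq.2
  have hk' : (p.1 + p.2 + (q.1 + q.2) : ℝ) < k := mod_cast hk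
  have hbound : (a + c) * (k * |(cross p q : ℝ)|) ≤ (a + c) * (p.1 + p.2 + (q.1 + q.2)) := calc
    (a + c) * (k * |(cross p q : ℝ)|) = |k * ((a + c) * cross p q)| := by
      rw [abs_mul, abs_mul, Nat.abs_cast, abs_of_pos (add_pos ha hc)]
      ring
    _ = |(q.1 + q.2) * displacement a c (k • p) - (p.1 + p.2) * displacement a c (k • q)| := by
      rw [add_mul_cross, map_nsmul, map_nsmul, nsmul_eq_mul, nsmul_eq_mul]
      ring_nf
    _ ≤ (q.1 + q.2) * |displacement a c (k • p)| + (p.1 + p.2) * |displacement a c (k • q)| := by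
      refine (abs_sub _ _).trans_eq ?_
      rw [abs_mul, abs_mul, abs_of_nonneg hp', abs_of_nonneg hq']
    _ ≤ (q.1 + q.2) * (a + c) + (p.1 + p.2) * (a + c) := by gcongr
    _ = (a + c) * (p.1 + p.2 + (q.1 + q.2)) := by ring
  have hlt : k * |(cross p q : ℝ)| < k * 1 := by
    rw [mul_one]
    exact (le_of_mul_le_mul_left hbound (add_pos ha hc)).trans_lt hk'
  have hlt_one : |cross p q| < 1 := by
    exact_mod_cast lt_of_mul_lt_mul_left hlt k.cast_nonneg
  exact Int.abs_lt_one_iff.mp hlt_one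

/-- A word whose content is proportional to `d ≠ 0` moves points by an amount proportional to its
length, which is bounded by the size of the domain. -/
lemma Is3ietWord.exists_length_le_of_cross_eq_zero {v : ℤ → Letter} (hv : Is3ietWord v)
    {d : ℤ × ℤ} (hd : d ≠ 0) :
    ∃ N : ℕ, ∀ l, IsFactor l v → cross d (content l) = 0 → l.length ≤ N := by
  obtain ⟨a, c, -, -, hindep, hbound⟩ := hv.exists_abs_displacement_le
  have hdrift : 0 < |displacement a c d| := abs_pos.mpr (displacement_ne_zero hindep hd)
  refine ⟨⌊|(d.1 + d.2 : ℝ)| * (a + c) / |displacement a c d|⌋₊, fun l hl hcross => ?_⟩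
  apply Nat.le_floor
  rw [le_div_iff₀ hdrift]
  have hsize : (l.length : ℝ) ≤ (content l).1 + (content l).2 := mod_cast length_le_content l
  have hprop : ((content l).1 + (content l).2) * displacement a c d =
      (d.1 + d.2) * displacement a c (content l) := by
    have := add_mul_cross a c d (content l)
    rw [hcross, Int.cast_zero, mul_zero] at this
    linarith
  calc l.length * |displacement a c d|
      ≤ |((content l).1 + (content l).2) * displacement a c d| := by
        rw [abs_mul]
        gcongr
        exact hsize.trans (le_abs_self _)
    _ = |(d.1 + d.2 : ℝ)| * |displacement a c (content l)| := by rw [hprop, abs_mul]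
    _ ≤ |(d.1 + d.2 : ℝ)| * (a + c) := by gcongr; exact hbound l hl

/-! ### Preserving morphisms are content linear -/

lemma Preserves3iet.cross_eq_zero {g : Morph} (hg : Preserves3iet g) {w₁ w₂ : List Letter}
    (hw : ∀ k : ℕ, ∃ u, Is3ietWord u ∧ IsFactor (List.replicate k w₁).flatten u ∧
      IsFactor (List.replicate k w₂).flatten u) :
    cross (content (w₁.flatMap g)) (content (w₂.flatMap g)) = 0 := by
  set p := content (w₁.flatMap g)
  set q := content (w₂.flatMap g)
  obtain ⟨u, hu, h₁, h₂⟩ := hw (p.1 + p.2 + (q.1 + q.2) + 1).toNat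
  obtain ⟨v, hv⟩ := exists_isImageWord hg.1 u
  obtain ⟨a, c, ha, hc, -, hbound⟩ := (hg.2 u v hu hv).exists_abs_displacement_le
  refine cross_eq_zero_of_displacement_small ha hc (content_nonneg _) (content_nonneg _)
    (k := (p.1 + p.2 + (q.1 + q.2) + 1).toNat) (by omega) ?_ ?_
  · simpa only [content_flatten_replicate] using hbound _ (hv.isFactor_flatten_replicate h₁)
  · simpa only [content_flatten_replicate] using hbound _ (hv.isFactor_flatten_replicate h₂)

open Convention in
/-- In the exchange with parameters `(1, 1, 1 + ε)` both `AC` and `B` translate by `ε`, so that an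
orbit moving slowly across the point `1` reads first `AC` and then `B` repeatedly. -/
lemma exists_is3ietWord_powers_AC_B (k : ℕ) :
    ∃ u, Is3ietWord u ∧ IsFactor (List.replicate k [.A, .C]).flatten u ∧
      IsFactor (List.replicate k [.B]).flatten u := by
  obtain ⟨ε, hirr, hε, hεk⟩ := exists_irrational_btwn (show (0 : ℝ) < 1 / (k + 1) by positivity)
  have hkε : k * ε ≤ 1 := by
    rw [lt_div_iff₀ (by positivity)] at hεk
    linarith
  have hindep : LinearIndependent ℚ ![(1 : ℝ) + 1, 1 + (1 + ε)] :=
    (LinearIndependent.pair_iff' (by norm_num)).mpr fun q hq => hirr ⟨q * 2 - 2, by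
      rw [Rat.smul_def] at hq
      push_cast
      linarith⟩
  have hstep (i : ℕ) (hi : i < k) : (i + 1 : ℝ) * ε ≤ k * ε :=
    mul_le_mul_of_nonneg_right (mod_cast hi) hε.le
  have hkε₀ : 0 ≤ k * ε := by positivity
  have hx : 1 - k * ε ∈ leftClosed.domain (1 + 1 + (1 + ε)) :=
    ⟨not_lt.mpr (by linarith), show 1 - k * ε < _ by linarith⟩
  have hAC := codedPath_replicate_AC (κ := leftClosed) (α := 1) (β := 1) (γ := 1 + ε) (k := k)
    (by linarith) zero_le_one hx.1 fun i hi => show _ < _ by linarith [hstep i hi]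
  rw [show 1 - k * ε + k * (1 + ε - 1) = 1 by ring] at hAC
  have hB := codedPath_replicate_B (κ := leftClosed) (α := 1) (β := 1) (γ := 1 + ε) (k := k)
    (by linarith) (lt_irrefl 1) fun i hi => show _ < _ by linarith [hstep i hi]
  rw [← List.flatten_replicate_singleton] at hB
  have hfactor := CodedPath.factorAt
    (isOrbit_orbit zero_le_one zero_le_one (by linarith) hx) (n := 0) (hAC.append hB)
  exact ⟨_, is3ietWord_iff.mpr ⟨leftClosed, 1, 1, 1 + ε, _, one_pos, one_pos, by linarith, hindep,
    hx, rfl⟩, IsFactor.left_of_append ⟨0, hfactor⟩, IsFactor.right_of_append ⟨0, hfactor⟩⟩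

lemma exists_is3ietWord_powers_ACC_BC (k : ℕ) :
    ∃ u, Is3ietWord u ∧ IsFactor (List.replicate k [.A, .C, .C]).flatten u ∧
      IsFactor (List.replicate k [.B, .C]).flatten u := by
  obtain ⟨u, hu, hAC, hB⟩ := exists_is3ietWord_powers_AC_B k
  obtain ⟨v, hv⟩ := exists_isImageWord (theta_ne_nil 0) u
  exact ⟨v, (preserves3iet_theta 0).2 u v hu hv, hv.isFactor_flatten_replicate hAC,
    hv.isFactor_flatten_replicate hB⟩

lemma cross_add_right (d p q : ℤ × ℤ) : cross d (p + q) = cross d p + cross d q := by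
  simp only [cross, Prod.fst_add, Prod.snd_add]
  ring

lemma cross_content_flatMap_eq_zero {d : ℤ × ℤ} {g : Morph} (h : ∀ a, cross d (content (g a)) = 0)
    (l : List Letter) : cross d (content (l.flatMap g)) = 0 := by
  induction l with
  | nil => simp [cross]
  | cons a l ih => rw [List.flatMap_cons, content_append, cross_add_right, h, ih, add_zero]

lemma length_le_length_flatMap {σ τ : Type*} {g : σ → List τ} (hg : ∀ a, g a ≠ []) (l : List σ) :
    l.length ≤ (l.flatMap g).length := by
  induction l with
  | nil => rfl
  | cons a l ih =>
    have := List.length_pos_iff.mpr (hg a)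
    rw [List.flatMap_cons, List.length_append, List.length_cons]
    omega

lemma Preserves3iet.exists_cross_content_ne_zero {g : Morph} (hg : Preserves3iet g) {d : ℤ × ℤ}
    (hd : d ≠ 0) : ∃ a, cross d (content (g a)) ≠ 0 := by
  by_contra! hcross
  obtain ⟨u, hu, -⟩ := exists_is3ietWord_powers_AC_B 0
  obtain ⟨v, hv⟩ := exists_isImageWord hg.1 u
  obtain ⟨N, hN⟩ := (hg.2 u v hu hv).exists_length_le_of_cross_eq_zero hd
  obtain ⟨l, hl, hlength⟩ := exists_isFactor_length_eq u (N + 1)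
  have hle := hN _ (hv.isFactor_flatMap hl) (cross_content_flatMap_eq_zero hcross l)
  have := length_le_length_flatMap hg.1 l
  omega

lemma Preserves3iet.contentLinear {g : Morph} (hg : Preserves3iet g) : ContentLinear g := by
  have h₁ := hg.cross_eq_zero exists_is3ietWord_powers_AC_B
  have h₂ := hg.cross_eq_zero exists_is3ietWord_powers_ACC_BC
  by_contra hne
  obtain ⟨x, hx⟩ := hg.exists_cross_content_ne_zero (sub_ne_zero.mpr hne)
  apply hx
  simp only [List.flatMap_cons, List.flatMap_nil, List.append_nil, content_append, cross,
    Prod.fst_add, Prod.snd_add] at h₁ h₂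
  simp only [cross, Prod.fst_sub, Prod.snd_sub, Prod.fst_add, Prod.snd_add]
  cases x
  · linear_combination h₂ - 2 * h₁
  · linear_combination -h₁
  · linear_combination h₁ - h₂

lemma exists_length_le_of_finite {σ : Type*} {S : Set (Letter → List σ)} (hS : S.Finite) :
    ∃ N, ∀ φ ∈ S, ∀ a, (φ a).length ≤ N := by
  obtain ⟨N, hN⟩ :=
    (hS.image fun φ => (φ .A).length + (φ .B).length + (φ .C).length).bddAbove
  refine ⟨N, fun φ hφ a => ?_⟩
  have hsum : (φ .A).length + (φ .B).length + (φ .C).length ≤ N := hN (Set.mem_image_of_mem _ hφ)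
  cases a <;> omega

/-- The monoid Φ_3iet of 3iet preserving morphisms is not finitely generated:
there is no finite set S of 3iet preserving morphisms such that every 3iet
preserving morphism is a composition of finitely many elements of S. -/
theorem Phi3iet_not_finitely_generated :
    ¬ ∃ S : Set Morph, S.Finite ∧ (∀ φ ∈ S, Preserves3iet φ) ∧
      ∀ φ : Morph, Preserves3iet φ →
        ∃ L : List Morph, (∀ ψ ∈ L, ψ ∈ S) ∧ φ = L.foldr compM idM := by
  rintro ⟨S, hfinite, hpres, hgen⟩
  obtain ⟨N, hN⟩ := exists_length_le_of_finite hfinite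
  obtain ⟨L, hLS, hL⟩ := hgen (theta (N + 1)) (preserves3iet_theta (N + 1))
  obtain ⟨ψ, hψ, a, hlong⟩ := exists_long_factor_of_compM_foldr_eq_theta N.succ_ne_zero L
    (fun ψ hψ => ⟨(hpres ψ (hLS ψ hψ)).1, (hpres ψ (hLS ψ hψ)).contentLinear⟩)
    contentLinear_idM (fun _ => rfl) (by rw [hL, idM_compM])
  have := hN ψ (hLS ψ hψ) a
  omega
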